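/- Continuity of the Petz–Rényi divergence in α (lower bound): Let ρ, σ be states on ℂ^d and γ ∈ (0,1], and suppose D(ρ‖σ) < ∞ and c_γ(ρ‖σ) < ∞. Then for all δ with 0 < δ ≤ log(3)/(2·c_γ(ρ‖σ)), D_{1−δ}(ρ‖σ) ≥ D(ρ‖σ) − δ · c_γ(ρ‖σ)². -/

import Mathlib

open scoped Kronecker ComplexOrder

noncomputable section

namespace QCD

attribute [local instance] Classical.propDecidable

variable {n m : Type} [Fintype n] [DecidableEq n] [Fintype m] [DecidableEq m]

/-- The real part of the trace of a complex matrix. -/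
def rtr (A : Matrix n n ℂ) : ℝ := (A.trace).re

/-- A quantum state: positive semidefinite with trace one. -/
def IsState (ρ : Matrix n n ℂ) : Prop := ρ.PosSemidef ∧ ρ.trace = 1

/-- Loewner order: `A ≤ B` iff `B - A` is positive semidefinite. -/
def loewnerLE (A B : Matrix n n ℂ) : Prop := (B - A).PosSemidef

/-- Support containment (for PSD matrices): `ker σ ⊆ ker ρ`. -/
def SuppLE (ρ σ : Matrix n n ℂ) : Prop := ∀ v : n → ℂ, σ.mulVec v = 0 → ρ.mulVec v = 0

/-- Functional calculus for Hermitian matrices (junk value `0` otherwise). -/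
def matFun (f : ℝ → ℝ) (A : Matrix n n ℂ) : Matrix n n ℂ :=
  if hA : A.IsHermitian then
    (hA.eigenvectorUnitary : Matrix n n ℂ) *
      Matrix.diagonal (fun i => (f (hA.eigenvalues i) : ℂ)) *
      (star (hA.eigenvectorUnitary : Matrix n n ℂ))
  else 0

/-- Matrix square root via functional calculus. -/
def msqrt (A : Matrix n n ℂ) : Matrix n n ℂ := matFun Real.sqrt A

/-- Matrix real power taken on the support (`0 ^ t := 0`). -/
def mpow (A : Matrix n n ℂ) (t : ℝ) : Matrix n n ℂ :=
  matFun (fun x => if x = 0 then 0 else x ^ t) A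

/-- Matrix base-2 logarithm on the support. -/
def mlog (A : Matrix n n ℂ) : Matrix n n ℂ := matFun (Real.logb 2) A

/-- Positive part of a Hermitian matrix. -/
def mposPart (A : Matrix n n ℂ) : Matrix n n ℂ := matFun (fun x => max x 0) A

/-- Trace norm. -/
def traceNorm (A : Matrix n m ℂ) : ℝ := rtr (msqrt (A.conjTranspose * A))

/-- Base-2 logarithm as an extended real (`⊥` on nonpositive input). -/
def elog (x : ℝ) : EReal := if x ≤ 0 then ⊥ else ((Real.logb 2 x : ℝ) : EReal)

/-- Base-2 logarithm of an extended real. -/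
def elogE (x : EReal) : EReal := if x = ⊤ then ⊤ else elog x.toReal

/-- `2 ^ x` for an extended real `x`. -/
def epow2 (x : EReal) : EReal :=
  if x = ⊤ then ⊤ else if x = ⊥ then 0 else ((((2:ℝ) ^ x.toReal : ℝ)) : EReal)

/-- Umegaki relative entropy (base 2), `⊤` if the support condition fails. -/
def relEntropy (ρ σ : Matrix n n ℂ) : EReal :=
  if SuppLE ρ σ then ((rtr (ρ * (mlog ρ - mlog σ)) : ℝ) : EReal) else ⊤

/-- Petz–Rényi divergence (base 2). -/
def petzRenyi (α : ℝ) (ρ σ : Matrix n n ℂ) : EReal :=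
  if 1 < α ∧ ¬ SuppLE ρ σ then ⊤
  else (((α - 1)⁻¹ : ℝ) : EReal) * elog (rtr (mpow ρ α * mpow σ (1 - α)))

/-- Geometric (maximal) Rényi divergence (base 2). -/
def geomRenyi (α : ℝ) (ρ σ : Matrix n n ℂ) : EReal :=
  if SuppLE ρ σ then
    (((α - 1)⁻¹ : ℝ) : EReal) *
      elog (rtr (σ * mpow (mpow σ (-(1/2 : ℝ)) * ρ * mpow σ (-(1/2 : ℝ))) α))
  else ⊤

/-- Max-relative entropy (base 2). -/
def dMax (ρ σ : Matrix n n ℂ) : EReal :=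
  sInf {x : EReal | ∃ lam : ℝ, x = (lam : EReal) ∧ loewnerLE ρ ((((2:ℝ) ^ lam : ℝ) : ℂ) • σ)}

/-- Uhlmann fidelity. -/
def fidelity (ρ σ : Matrix n n ℂ) : ℝ := (rtr (msqrt (msqrt σ * ρ * msqrt σ))) ^ 2

/-- Sine (purified) distance. -/
def sineDist (ρ σ : Matrix n n ℂ) : ℝ := Real.sqrt (1 - fidelity ρ σ)

/-- Smoothed max-relative entropy: smoothing over states in the sine-distance ball. -/
def dMaxSmooth (δ : ℝ) (ρ σ : Matrix n n ℂ) : EReal :=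
  ⨅ (ρ' : Matrix n n ℂ) (_ : IsState ρ' ∧ sineDist ρ ρ' ≤ δ), dMax ρ' σ

/-- Hypothesis testing divergence (base 2). -/
def dH (ε : ℝ) (ρ σ : Matrix n n ℂ) : EReal :=
  - elog (sInf {x : ℝ | ∃ T : Matrix n n ℂ,
      T.PosSemidef ∧ ((1 : Matrix n n ℂ) - T).PosSemidef ∧ 1 - ε ≤ rtr (T * ρ) ∧ x = rtr (T * σ)})

/-- The quantity `c_γ(ρ‖σ)`. -/
def cGamma (γ : ℝ) (ρ σ : Matrix n n ℂ) : EReal :=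
  ((γ⁻¹ : ℝ) : EReal) *
    elogE (epow2 ((γ : ℝ) * petzRenyi (1 + γ) ρ σ) +
           epow2 (((-γ : ℝ) : EReal) * petzRenyi (1 - γ) ρ σ) + 1)

/-- Binary entropy (base 2). -/
def binEnt (x : ℝ) : ℝ := -(x * Real.logb 2 x) - (1 - x) * Real.logb 2 (1 - x)

/-- Action of `id_k ⊗ Φ` on block matrices. -/
def blockApply {k : Type} (Φ : Matrix n n ℂ →ₗ[ℂ] Matrix m m ℂ)
    (M : Matrix (k × n) (k × n) ℂ) : Matrix (k × m) (k × m) ℂ :=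
  Matrix.of fun p q => Φ (Matrix.of fun a b => M (p.1, a) (q.1, b)) p.2 q.2

/-- Action of `Φ ⊗ id_k` on block matrices. -/
def blockApplyRight {k : Type} (Φ : Matrix n n ℂ →ₗ[ℂ] Matrix m m ℂ)
    (M : Matrix (n × k) (n × k) ℂ) : Matrix (m × k) (m × k) ℂ :=
  Matrix.of fun p q => Φ (Matrix.of fun a b => M (a, p.2) (b, q.2)) p.1 q.1

/-- Quantum channel: trace preserving and completely positive. -/
def IsQChannel (Φ : Matrix n n ℂ →ₗ[ℂ] Matrix m m ℂ) : Prop :=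
  (∀ M : Matrix n n ℂ, (Φ M).trace = M.trace) ∧
  (∀ k : ℕ, 1 ≤ k → ∀ M : Matrix (Fin k × n) (Fin k × n) ℂ, M.PosSemidef →
    (blockApply Φ M).PosSemidef)

/-- `id_k ⊗ Φ` as a linear map. -/
def blockApplyL (k : Type) (Φ : Matrix n n ℂ →ₗ[ℂ] Matrix m m ℂ) :
    Matrix (k × n) (k × n) ℂ →ₗ[ℂ] Matrix (k × m) (k × m) ℂ where
  toFun := blockApply Φ
  map_add' M N := by
    ext p q
    show Φ (Matrix.of fun a b => (M + N) (p.1, a) (q.1, b)) p.2 q.2 = _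
    have h : (Matrix.of fun a b => (M + N) (p.1, a) (q.1, b)) =
        (Matrix.of fun a b => M (p.1, a) (q.1, b)) +
          (Matrix.of fun a b => N (p.1, a) (q.1, b)) := rfl
    rw [h, map_add]
    rfl
  map_smul' c M := by
    ext p q
    show Φ (Matrix.of fun a b => (c • M) (p.1, a) (q.1, b)) p.2 q.2 = _
    have h : (Matrix.of fun a b => (c • M) (p.1, a) (q.1, b)) =
        c • (Matrix.of fun a b => M (p.1, a) (q.1, b)) := rfl
    rw [h, map_smul]
    rfl

/-- `Φ ⊗ id_k` as a linear map. -/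
def blockApplyRightL (k : Type) (Φ : Matrix n n ℂ →ₗ[ℂ] Matrix m m ℂ) :
    Matrix (n × k) (n × k) ℂ →ₗ[ℂ] Matrix (m × k) (m × k) ℂ where
  toFun := blockApplyRight Φ
  map_add' M N := by
    ext p q
    show Φ (Matrix.of fun a b => (M + N) (a, p.2) (b, q.2)) p.1 q.1 = _
    have h : (Matrix.of fun a b => (M + N) (a, p.2) (b, q.2)) =
        (Matrix.of fun a b => M (a, p.2) (b, q.2)) +
          (Matrix.of fun a b => N (a, p.2) (b, q.2)) := rfl
    rw [h, map_add]
    rfl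
  map_smul' c M := by
    ext p q
    show Φ (Matrix.of fun a b => (c • M) (a, p.2) (b, q.2)) p.1 q.1 = _
    have h : (Matrix.of fun a b => (c • M) (a, p.2) (b, q.2)) =
        c • (Matrix.of fun a b => M (a, p.2) (b, q.2)) := rfl
    rw [h, map_smul]
    rfl

/-- Tensor product of two channels (Kronecker product action). -/
def tensorChannel {n₁ m₁ n₂ m₂ : Type}
    (E₁ : Matrix n₁ n₁ ℂ →ₗ[ℂ] Matrix m₁ m₁ ℂ) (E₂ : Matrix n₂ n₂ ℂ →ₗ[ℂ] Matrix m₂ m₂ ℂ) :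
    Matrix (n₁ × n₂) (n₁ × n₂) ℂ →ₗ[ℂ] Matrix (m₁ × m₂) (m₁ × m₂) ℂ :=
  (blockApplyRightL m₂ E₁).comp (blockApplyL n₁ E₂)

/-- Index type for `k`-fold tensor powers. -/
def tpow (ι : Type) : ℕ → Type
  | 0 => PUnit
  | (k+1) => tpow ι k × ι

def tpowFintype (ι : Type) [Fintype ι] : ∀ k : ℕ, Fintype (tpow ι k)
  | 0 => inferInstanceAs (Fintype PUnit)
  | (k+1) => letI := tpowFintype ι k; inferInstanceAs (Fintype (tpow ι k × ι))

instance (ι : Type) [Fintype ι] (k : ℕ) : Fintype (tpow ι k) := tpowFintype ι k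

def tpowDecEq (ι : Type) [DecidableEq ι] : ∀ k : ℕ, DecidableEq (tpow ι k)
  | 0 => inferInstanceAs (DecidableEq PUnit)
  | (k+1) => letI := tpowDecEq ι k; inferInstanceAs (DecidableEq (tpow ι k × ι))

instance (ι : Type) [DecidableEq ι] (k : ℕ) : DecidableEq (tpow ι k) := tpowDecEq ι k

/-- `k`-fold Kronecker tensor power of a matrix. -/
def tpowMat (ρ : Matrix n n ℂ) : ∀ k : ℕ, Matrix (tpow n k) (tpow n k) ℂ
  | 0 => 1
  | (k+1) => (tpowMat ρ k) ⊗ₖ ρ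

/-- `k`-fold tensor power of a channel. -/
def tpowChannel (Φ : Matrix n n ℂ →ₗ[ℂ] Matrix m m ℂ) :
    ∀ k : ℕ, Matrix (tpow n k) (tpow n k) ℂ →ₗ[ℂ] Matrix (tpow m k) (tpow m k) ℂ
  | 0 => LinearMap.id
  | (k+1) => tensorChannel (tpowChannel Φ k) Φ

/-- Channel divergence induced by a divergence `𝔇` on states:
sup over `k ≥ 1` and input states `ν` on `ℂ^k ⊗ ℂ^d`. -/
def chDiv (𝔇 : ∀ (p : Type) [Fintype p] [DecidableEq p], Matrix p p ℂ → Matrix p p ℂ → EReal)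
    (E F : Matrix n n ℂ →ₗ[ℂ] Matrix m m ℂ) : EReal :=
  ⨆ (k : ℕ) (_ : 1 ≤ k) (ν : Matrix (Fin k × n) (Fin k × n) ℂ) (_ : IsState ν),
    𝔇 (Fin k × m) (blockApply E ν) (blockApply F ν)

/-- The geometric Rényi divergence as a divergence family. -/
def geomD (α : ℝ) : ∀ (p : Type) [Fintype p] [DecidableEq p],
    Matrix p p ℂ → Matrix p p ℂ → EReal :=
  fun _ _ _ => geomRenyi α

/-- The Umegaki relative entropy as a divergence family. -/
def relD : ∀ (p : Type) [Fintype p] [DecidableEq p],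
    Matrix p p ℂ → Matrix p p ℂ → EReal :=
  fun _ _ _ => relEntropy

/-- The hypothesis testing divergence as a divergence family. -/
def dHD (ε : ℝ) : ∀ (p : Type) [Fintype p] [DecidableEq p],
    Matrix p p ℂ → Matrix p p ℂ → EReal :=
  fun _ _ _ => dH ε

/-- Regularized channel relative entropy. -/
def regRelEntropy (E F : Matrix n n ℂ →ₗ[ℂ] Matrix m m ℂ) : EReal :=
  ⨆ (k : ℕ) (_ : 1 ≤ k),
    (((k : ℝ)⁻¹ : ℝ) : EReal) * chDiv relD (tpowChannel E k) (tpowChannel F k)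

end QCD

namespace QCD

lemma aux_exp_ineq (b : ℝ) (h0 : 0 ≤ b) (h1 : b ≤ 1/2) :
    Real.log (1 + b) - Real.log (1 - b) ≤ 2 * b * Real.log 3 := by
  have e1 := Real.hasSum_log_sub_log_of_abs_lt_one (x := b) (by rw [abs_lt]; constructor <;> linarith)
  have e2 := Real.hasSum_log_sub_log_of_abs_lt_one (x := (1/2 : ℝ)) (by rw [abs_lt]; constructor <;> linarith)
  have e3 := e2.mul_left (2 * b)
  have : Real.log (1 + 1/2) - Real.log (1 - 1/2) = Real.log 3 := by
    rw [← Real.log_div (by norm_num) (by norm_num)]; norm_num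
  rw [this] at e3
  refine hasSum_le (fun k => ?_) e1 e3
  have h2 : b ^ (2 * k) ≤ (1/2) ^ (2 * k) := pow_le_pow_left₀ h0 h1 _
  have h3 : b ^ (2 * k + 1) ≤ 2 * b * (1/2) ^ (2 * k + 1) := by
    rw [pow_succ, pow_succ]; nlinarith
  have h4 : (0:ℝ) ≤ 2 * (1 / (2 * k + 1)) := by positivity
  calc _ ≤ 2 * (1 / (2 * (k:ℝ) + 1)) * (2 * b * (1/2) ^ (2 * k + 1)) :=
        mul_le_mul_of_nonneg_left h3 h4
    _ = _ := by ring

lemma aux_concave (b : ℝ) (h0 : 0 ≤ b) (h1 : b ≤ 1/2) :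
    ConcaveOn ℝ (Set.Ici (3:ℝ)) (fun z : ℝ => z ^ b + z ^ (-b)) := by
  have hd : ∀ (c x : ℝ), 0 < x → HasDerivAt (fun z : ℝ => z ^ c) (c * x ^ (c - 1)) x :=
    fun c x hx => Real.hasDerivAt_rpow_const (Or.inl hx.ne')
  refine concaveOn_of_hasDerivWithinAt2_nonpos (f' := fun z => b * z ^ (b-1) + (-b) * z ^ (-b-1))
    (f'' := fun z => b * ((b-1) * z ^ (b-1-1)) + (-b) * ((-b-1) * z ^ (-b-1-1)))
    (convex_Ici 3) ?_ ?_ ?_ ?_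
  · intro x hx
    have hx : (0:ℝ) < x := lt_of_lt_of_le (by norm_num) hx
    exact ((hd b x hx).add (hd (-b) x hx)).continuousAt.continuousWithinAt
  · intro x hx
    rw [interior_Ici] at hx
    have hx : (0:ℝ) < x := lt_trans (by norm_num) hx
    exact ((hd b x hx).add (hd (-b) x hx)).hasDerivWithinAt
  · intro x hx
    rw [interior_Ici] at hx
    have hx : (0:ℝ) < x := lt_trans (by norm_num) hx
    exact (((hd (b-1) x hx).const_mul b).add ((hd (-b-1) x hx).const_mul (-b))).hasDerivWithinAt
  · intro x hx
    rw [interior_Ici] at hx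
    have hx3 : (3:ℝ) < x := hx
    have hx : (0:ℝ) < x := lt_trans (by norm_num) hx
    have e : x ^ (b-1-1) = x ^ (2*b) * x ^ (-b-1-1) := by
      rw [← Real.rpow_add hx]; ring_nf
    have hp : 0 < x ^ (-b-1-1) := Real.rpow_pos_of_pos hx _
    have key : 1 + b ≤ (1 - b) * x ^ (2*b) := by
      have k1 := aux_exp_ineq b h0 h1
      have k2 : Real.log 3 ≤ Real.log x := Real.log_le_log (by norm_num) hx3.le
      rw [← Real.log_le_log_iff (by linarith) (mul_pos (by linarith) (Real.rpow_pos_of_pos hx _)),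
        Real.log_mul (by linarith) (Real.rpow_pos_of_pos hx _).ne', Real.log_rpow hx]
      nlinarith
    show b * ((b-1) * x ^ (b-1-1)) + (-b) * ((-b-1) * x ^ (-b-1-1)) ≤ 0
    rw [e]
    have := mul_nonneg (mul_nonneg h0 hp.le) (sub_nonneg.2 key)
    nlinarith

lemma aux_cosh (z b : ℝ) (hz : 0 < z) : z ^ b + z ^ (-b) = 2 * Real.cosh (b * Real.log z) := by
  rw [Real.cosh_eq, Real.rpow_def_of_pos hz, Real.rpow_def_of_pos hz]
  ring_nf

lemma aux_num (y : ℝ) (h0 : 0 ≤ y) (h1 : y ≤ Real.log 3 / 2) :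
    2 * Real.cosh y - 2 ≤ y ^ 2 / Real.log 2 := by
  have l2 := Real.log_two_lt_d9
  have l2' : 0 < Real.log 2 := Real.log_pos (by norm_num)
  have l3 : Real.log 3 ≤ 2 * Real.log 2 := by
    have : Real.log 3 ≤ Real.log (2^2) := Real.log_le_log (by norm_num) (by norm_num)
    rwa [Real.log_pow] at this
  have c1 := Real.cosh_le_exp_half_sq y
  have hy : y ^ 2 ≤ 1/2 := by nlinarith
  have c2 := Real.abs_exp_sub_one_sub_id_le (x := y^2/2) (by rw [abs_of_nonneg (by positivity)]; linarith)
  have c3 := (abs_le.1 c2).2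
  have hq : 0 ≤ y ^ 2 := sq_nonneg y
  rw [le_div_iff₀ l2']
  have c4 : 2 * Real.cosh y - 2 ≤ y ^ 2 * (5/4) := by nlinarith
  have c5 : 1 ≤ Real.cosh y := Real.one_le_cosh y
  nlinarith

lemma aux_main {ι : Type*} [Fintype ι] (P X : ι → ℝ) (hP : ∀ i, 0 ≤ P i) (hs : ∑ i, P i = 1)
    (γ δ Z : ℝ) (hγ : 0 < γ) (hδ : 0 < δ)
    (hZ : Z = ∑ i, P i * Real.exp (γ * X i) + ∑ i, P i * Real.exp (-γ * X i) + 1)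
    (hZ3 : 3 ≤ Z)
    (hle : δ * (Real.log Z / γ) ≤ Real.log 3 / 2) :
    Real.log (∑ i, P i * Real.exp (-δ * X i)) ≤
      -δ * ∑ i, P i * X i + (δ * (Real.log Z / γ)) ^ 2 / Real.log 2 := by
  set b := δ / γ with hb
  have hb0 : 0 < b := div_pos hδ hγ
  have hbl : δ * (Real.log Z / γ) = b * Real.log Z := by rw [hb]; ring
  have l3 : 0 < Real.log 3 := Real.log_pos (by norm_num)
  have lZ : Real.log 3 ≤ Real.log Z := Real.log_le_log (by norm_num) hZ3
  rw [hbl] at hle ⊢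
  have hb1 : b ≤ 1/2 := by
    by_contra h
    push Not at h
    nlinarith
  let z : ι → ℝ := fun i => Real.exp (γ * X i) + Real.exp (-γ * X i) + 1
  have hz3 : ∀ i, 3 ≤ z i := by
    intro i
    have := Real.one_le_cosh (γ * X i)
    rw [Real.cosh_eq] at this
    show 3 ≤ Real.exp (γ * X i) + Real.exp (-γ * X i) + 1
    rw [neg_mul]; linarith
  have hzZ : ∑ i, P i * z i = Z := by
    rw [hZ, ← hs, ← Finset.sum_add_distrib, ← Finset.sum_add_distrib]
    exact Finset.sum_congr rfl fun i _ => by simp only [z]; ring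
  have J := (aux_concave b hb0.le hb1).le_map_sum (t := Finset.univ) (w := P) (p := z)
    (fun i _ => hP i) hs (fun i _ => hz3 i)
  simp only [smul_eq_mul, hzZ] at J
  rw [aux_cosh Z b (by linarith)] at J
  have pt : ∀ i, Real.exp (-δ * X i) ≤ 1 - δ * X i + (z i ^ b + z i ^ (-b)) - 2 := by
    intro i
    have hz0 : 0 < z i := by linarith [hz3 i]
    rw [aux_cosh (z i) b hz0]
    have a1 : γ * X i ≤ Real.log (z i) := by
      rw [Real.le_log_iff_exp_le hz0]
      have := Real.exp_pos (-γ * X i)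
      simp only [z]; linarith
    have a2 : -γ * X i ≤ Real.log (z i) := by
      rw [Real.le_log_iff_exp_le hz0]
      have := Real.exp_pos (γ * X i)
      simp only [z]; linarith
    have hlz : 0 ≤ Real.log (z i) := Real.log_nonneg (by linarith [hz3 i])
    have a3 : Real.cosh (δ * X i) ≤ Real.cosh (b * Real.log (z i)) := by
      rw [Real.cosh_le_cosh, abs_of_nonneg (mul_nonneg hb0.le hlz)]
      have : δ * X i = b * (γ * X i) := by rw [hb]; field_simp
      rw [this, abs_mul, abs_of_pos hb0]
      apply mul_le_mul_of_nonneg_left _ hb0.le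
      rw [abs_le]; constructor <;> linarith
    rw [Real.cosh_eq] at a3
    have a4 := Real.add_one_le_exp (δ * X i)
    rw [neg_mul]
    linarith
  have hS : ∑ i, P i * Real.exp (-δ * X i) ≤
      1 - δ * ∑ i, P i * X i + ∑ i, P i * (z i ^ b + z i ^ (-b)) - 2 := by
    calc _ ≤ ∑ i, P i * (1 - δ * X i + (z i ^ b + z i ^ (-b)) - 2) :=
          Finset.sum_le_sum fun i _ => mul_le_mul_of_nonneg_left (pt i) (hP i)
      _ = ∑ i, (P i - δ * (P i * X i) + P i * (z i ^ b + z i ^ (-b)) - P i * 2) :=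
          Finset.sum_congr rfl fun i _ => by ring
      _ = _ := by
          rw [Finset.sum_sub_distrib, Finset.sum_add_distrib, Finset.sum_sub_distrib,
            ← Finset.mul_sum, ← Finset.sum_mul, hs]; ring
  have hpos : 0 < ∑ i, P i * Real.exp (-δ * X i) := by
    obtain ⟨i, _, hi⟩ := Finset.exists_ne_zero_of_sum_ne_zero (hs.trans_ne one_ne_zero)
    refine Finset.sum_pos' (fun i _ => mul_nonneg (hP i) (Real.exp_pos _).le)
      ⟨i, Finset.mem_univ _, mul_pos (lt_of_le_of_ne (hP i) (Ne.symm hi)) (Real.exp_pos _)⟩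
  have L := Real.log_le_sub_one_of_pos hpos
  have N := aux_num (b * Real.log Z) (by nlinarith) hle
  linarith

end QCD

namespace QCD

variable {n : Type} [Fintype n] [DecidableEq n]

/-- overlap weights -/
def ovl {A B : Matrix n n ℂ} (hA : A.IsHermitian) (hB : B.IsHermitian) (i j : n) : ℝ :=
  Complex.normSq (((star (hA.eigenvectorUnitary : Matrix n n ℂ)) *
    (hB.eigenvectorUnitary : Matrix n n ℂ)) i j)

lemma ovl_nonneg {A B : Matrix n n ℂ} (hA : A.IsHermitian) (hB : B.IsHermitian) (i j : n) :
    0 ≤ ovl hA hB i j := Complex.normSq_nonneg _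

lemma rtr_matFun_mul {A B : Matrix n n ℂ} (hA : A.IsHermitian) (hB : B.IsHermitian)
    (f g : ℝ → ℝ) : rtr (matFun f A * matFun g B) =
      ∑ i, ∑ j, f (hA.eigenvalues i) * g (hB.eigenvalues j) * ovl hA hB i j := by
  rw [matFun, matFun, dif_pos hA, dif_pos hB]
  set U := (hA.eigenvectorUnitary : Matrix n n ℂ) with hU
  set V := (hB.eigenvectorUnitary : Matrix n n ℂ) with hV
  set D := Matrix.diagonal (fun i => (f (hA.eigenvalues i) : ℂ))
  set E := Matrix.diagonal (fun i => (g (hB.eigenvalues i) : ℂ))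
  have h1 : (U * D * star U * (V * E * star V)).trace =
      (D * (star U * V) * (E * star (star U * V))).trace := by
    rw [star_mul, star_star]
    have : U * D * star U * (V * E * star V) = U * (D * star U * (V * E * star V)) := by
      simp only [Matrix.mul_assoc]
    rw [this, Matrix.trace_mul_comm]
    simp only [Matrix.mul_assoc]
  rw [rtr, h1, Matrix.trace, Complex.re_sum]
  refine Finset.sum_congr rfl fun i _ => ?_
  rw [Matrix.diag_apply, Matrix.mul_apply, Complex.re_sum]
  refine Finset.sum_congr rfl fun j _ => ?_
  simp only [D, E, Matrix.diagonal_mul, Matrix.star_apply]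
  have : ovl hA hB i j = Complex.normSq ((star U * V) i j) := rfl
  rw [this]
  set w := (star U * V) i j
  have : ((f (hA.eigenvalues i) : ℂ)) * w * ((g (hB.eigenvalues j) : ℂ) * star w) =
    ((f (hA.eigenvalues i) * g (hB.eigenvalues j) * Complex.normSq w : ℝ) : ℂ) := by
    push_cast
    rw [Complex.normSq_eq_conj_mul_self]
    simp only [Complex.star_def]
    ring
  rw [this, Complex.ofReal_re]

lemma matFun_id {A : Matrix n n ℂ} (hA : A.IsHermitian) : matFun (fun x => x) A = A := by
  rw [matFun, dif_pos hA]
  conv_rhs => rw [hA.spectral_theorem]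
  simp [Unitary.conjStarAlgAut_apply, Function.comp_def]

lemma matFun_one {A : Matrix n n ℂ} (hA : A.IsHermitian) : matFun (fun _ => 1) A = 1 := by
  rw [matFun, dif_pos hA]
  simp

lemma matFun_mul {A : Matrix n n ℂ} (hA : A.IsHermitian) (f g : ℝ → ℝ) :
    matFun f A * matFun g A = matFun (fun x => f x * g x) A := by
  simp only [matFun, dif_pos hA]
  set U := (hA.eigenvectorUnitary : Matrix n n ℂ) with hU
  have h : star U * U = 1 := by simp [hU]
  have : ∀ D E : Matrix n n ℂ, U * D * star U * (U * E * star U) = U * (D * E) * star U := by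
    intro D E
    calc _ = U * D * (star U * U) * E * star U := by simp only [Matrix.mul_assoc]
      _ = _ := by rw [h]; simp only [Matrix.mul_assoc, Matrix.one_mul]
  rw [this, Matrix.diagonal_mul_diagonal]
  simp

lemma ovl_supp {A B : Matrix n n ℂ} (hA : A.IsHermitian) (hB : B.IsHermitian)
    (h : SuppLE A B) (i j : n) (hi : hA.eigenvalues i ≠ 0) (hj : hB.eigenvalues j = 0) :
    ovl hA hB i j = 0 := by
  have h1 := h (hB.eigenvectorBasis j) (by rw [hB.mulVec_eigenvectorBasis, hj, zero_smul])
  have h2 : (star (hA.eigenvectorUnitary : Matrix n n ℂ) * (A * (hB.eigenvectorUnitary : Matrix n n ℂ))) i j = 0 := by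
    rw [Matrix.mul_apply]
    refine Finset.sum_eq_zero fun k _ => ?_
    have : (A * (hB.eigenvectorUnitary : Matrix n n ℂ)) k j = 0 := by
      have := congrFun h1 k
      simpa [Matrix.mul_apply, Matrix.mulVec, dotProduct, Matrix.IsHermitian.eigenvectorUnitary_apply] using this
    rw [this, mul_zero]
  have h3 : star (hA.eigenvectorUnitary : Matrix n n ℂ) * A =
      Matrix.diagonal (fun i => (hA.eigenvalues i : ℂ)) * star (hA.eigenvectorUnitary : Matrix n n ℂ) := by
    have h5 := matFun_id hA
    rw [matFun, dif_pos hA] at h5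
    have h6 : star (hA.eigenvectorUnitary : Matrix n n ℂ) *
        (hA.eigenvectorUnitary : Matrix n n ℂ) = 1 := by simp
    refine (congrArg (fun M => star (hA.eigenvectorUnitary : Matrix n n ℂ) * M) h5).symm.trans ?_
    show star (hA.eigenvectorUnitary : Matrix n n ℂ) * (_ * _ * _) = _
    rw [← Matrix.mul_assoc, ← Matrix.mul_assoc, h6, Matrix.one_mul]
  rw [← Matrix.mul_assoc, h3, Matrix.mul_assoc, Matrix.diagonal_mul] at h2
  have h4 := (mul_eq_zero.1 h2).resolve_left (by exact_mod_cast hi)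
  rw [ovl, h4, map_zero]

end QCD

namespace QCD

lemma elog_pos {x : ℝ} (hx : 0 < x) : elog x = ((Real.logb 2 x : ℝ) : EReal) := by
  rw [elog, if_neg (not_le.2 hx)]

lemma epow2_coe (x : ℝ) : epow2 (x : EReal) = (((2:ℝ) ^ x : ℝ) : EReal) := by
  rw [epow2, if_neg (EReal.coe_ne_top x), if_neg (EReal.coe_ne_bot x), EReal.toReal_coe]

/-- All quantities as moments of a classical distribution. -/
lemma classical_model {d : ℕ} (ρ σ : Matrix (Fin d) (Fin d) ℂ)
    (hρ : IsState ρ) (hσ : IsState σ) (hS : SuppLE ρ σ) :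
    ∃ P X : Fin d × Fin d → ℝ, (∀ i, 0 ≤ P i) ∧ ∑ i, P i = 1 ∧
      rtr (ρ * (mlog ρ - mlog σ)) = (∑ i, P i * X i) / Real.log 2 ∧
      ∀ s : ℝ, rtr (mpow ρ (1 + s) * mpow σ (1 - (1 + s))) = ∑ i, P i * Real.exp (s * X i) := by
  have hA := hρ.1.isHermitian
  have hB := hσ.1.isHermitian
  have hp : ∀ i, 0 ≤ hA.eigenvalues i := hρ.1.eigenvalues_nonneg
  have hq : ∀ i, 0 ≤ hB.eigenvalues i := hσ.1.eigenvalues_nonneg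
  refine ⟨fun x => hA.eigenvalues x.1 * ovl hA hB x.1 x.2,
    fun x => Real.log (hA.eigenvalues x.1) - Real.log (hB.eigenvalues x.2), ?_, ?_, ?_, ?_⟩
  · exact fun x => mul_nonneg (hp _) (ovl_nonneg _ _ _ _)
  · have h := rtr_matFun_mul hA hB (fun x => x) (fun _ => 1)
    rw [matFun_id hA, matFun_one hB, mul_one, rtr, hρ.2] at h
    rw [Fintype.sum_prod_type]
    simpa using h.symm
  · have h1 := rtr_matFun_mul hA hB (fun x => x * Real.logb 2 x) (fun _ => 1)
    rw [matFun_one hB, mul_one, ← matFun_mul hA, matFun_id hA] at h1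
    have h2 := rtr_matFun_mul hA hB (fun x => x) (Real.logb 2)
    rw [matFun_id hA] at h2
    have h3 : rtr (ρ * (mlog ρ - mlog σ)) = rtr (ρ * mlog ρ) - rtr (ρ * mlog σ) := by
      rw [mul_sub, rtr, Matrix.trace_sub, Complex.sub_re]; rfl
    rw [h3, mlog, mlog, h1, h2, Fintype.sum_prod_type, Finset.sum_div, ← Finset.sum_sub_distrib]
    refine Finset.sum_congr rfl fun i _ => ?_
    rw [Finset.sum_div, ← Finset.sum_sub_distrib]
    refine Finset.sum_congr rfl fun j _ => ?_
    simp only [Real.logb]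
    ring
  · intro s
    rw [mpow, mpow, rtr_matFun_mul hA hB, Fintype.sum_prod_type]
    refine Finset.sum_congr rfl fun i _ => Finset.sum_congr rfl fun j _ => ?_
    by_cases hi : hA.eigenvalues i = 0
    · simp [hi]
    by_cases hj : hB.eigenvalues j = 0
    · simp [ovl_supp hA hB hS i j hi hj]
    have pi : 0 < hA.eigenvalues i := lt_of_le_of_ne (hp i) (Ne.symm hi)
    have qj : 0 < hB.eigenvalues j := lt_of_le_of_ne (hq j) (Ne.symm hj)
    simp only [if_neg hi, if_neg hj]
    rw [Real.rpow_add pi, Real.rpow_one, Real.rpow_def_of_pos pi, Real.rpow_def_of_pos qj]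
    have : Real.exp (s * (Real.log (hA.eigenvalues i) - Real.log (hB.eigenvalues j))) =
      Real.exp (Real.log (hA.eigenvalues i) * s) *
        Real.exp (Real.log (hB.eigenvalues j) * (1 - (1 + s))) := by
      rw [← Real.exp_add]; ring_nf
    rw [this]
    ring

/-- Continuity of the Petz–Rényi divergence in α (lower bound). -/
theorem petzRenyi_continuity_lower {d : ℕ} (ρ σ : Matrix (Fin d) (Fin d) ℂ)
    (hρ : IsState ρ) (hσ : IsState σ) (γ : ℝ) (hγ : 0 < γ ∧ γ ≤ 1)
    (hD : relEntropy ρ σ < ⊤) (hc : cGamma γ ρ σ < ⊤)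
    (δ : ℝ) (hδ : 0 < δ ∧ δ ≤ Real.logb 2 3 / (2 * (cGamma γ ρ σ).toReal)) :
    relEntropy ρ σ - ((δ * (cGamma γ ρ σ).toReal ^ 2 : ℝ) : EReal) ≤
      petzRenyi (1 - δ) ρ σ := by
  have hS : SuppLE ρ σ := by
    by_contra h
    rw [relEntropy, if_neg h] at hD
    exact lt_irrefl _ hD
  obtain ⟨P, X, hP, hs, hE, hM⟩ := classical_model ρ σ hρ hσ hS
  have l2 : 0 < Real.log 2 := Real.log_pos (by norm_num)
  have l3 : 0 < Real.log 3 := Real.log_pos (by norm_num)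
  have hpos : ∀ s : ℝ, 0 < ∑ i, P i * Real.exp (s * X i) := by
    intro s
    obtain ⟨i, _, hi⟩ := Finset.exists_ne_zero_of_sum_ne_zero (hs.trans_ne one_ne_zero)
    exact Finset.sum_pos' (fun i _ => mul_nonneg (hP i) (Real.exp_pos _).le)
      ⟨i, Finset.mem_univ _, mul_pos (lt_of_le_of_ne (hP i) (Ne.symm hi)) (Real.exp_pos _)⟩
  have hR : ∀ s : ℝ, petzRenyi (1 + s) ρ σ =
      ((s⁻¹ * Real.logb 2 (∑ i, P i * Real.exp (s * X i)) : ℝ) : EReal) := by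
    intro s
    rw [petzRenyi, if_neg (fun h => h.2 hS), hM, elog_pos (hpos s), add_sub_cancel_left,
      EReal.coe_mul]
  set Z : ℝ := ∑ i, P i * Real.exp (γ * X i) + ∑ i, P i * Real.exp (-γ * X i) + 1 with hZ
  have hZ3 : 3 ≤ Z := by
    have : ∑ i, P i * 2 ≤ ∑ i, P i * Real.exp (γ * X i) + ∑ i, P i * Real.exp (-γ * X i) := by
      rw [← Finset.sum_add_distrib]
      refine Finset.sum_le_sum fun i _ => ?_
      rw [← mul_add]
      apply mul_le_mul_of_nonneg_left _ (hP i)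
      have := Real.one_le_cosh (γ * X i)
      rw [Real.cosh_eq] at this
      rw [neg_mul]; linarith
    rw [← Finset.sum_mul, hs] at this
    linarith
  have lZ : Real.log 3 ≤ Real.log Z := Real.log_le_log (by norm_num) hZ3
  have hC : cGamma γ ρ σ = ((γ⁻¹ * Real.logb 2 Z : ℝ) : EReal) := by
    have e1 : γ * (γ⁻¹ * Real.logb 2 (∑ i, P i * Real.exp (γ * X i))) =
        Real.logb 2 (∑ i, P i * Real.exp (γ * X i)) := by
      rw [← mul_assoc, mul_inv_cancel₀ hγ.1.ne', one_mul]
    have e2 : -γ * ((-γ)⁻¹ * Real.logb 2 (∑ i, P i * Real.exp (-γ * X i))) =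
        Real.logb 2 (∑ i, P i * Real.exp (-γ * X i)) := by
      rw [← mul_assoc, mul_inv_cancel₀ (neg_ne_zero.2 hγ.1.ne'), one_mul]
    rw [cGamma, sub_eq_add_neg 1 γ, hR, hR, ← EReal.coe_mul, ← EReal.coe_mul, e1, e2,
      epow2_coe, epow2_coe, Real.rpow_logb (by norm_num) (by norm_num) (hpos _),
      Real.rpow_logb (by norm_num) (by norm_num) (hpos _), ← EReal.coe_add, ← EReal.coe_one,
      ← EReal.coe_add, ← hZ, elogE, if_neg (EReal.coe_ne_top _), EReal.toReal_coe,
      elog_pos (by linarith), EReal.coe_mul]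
  rw [hC, EReal.toReal_coe] at hδ ⊢
  rw [relEntropy, if_pos hS, hE, sub_eq_add_neg 1 δ, hR, ← EReal.coe_sub, EReal.coe_le_coe_iff]
  have hCp : 0 < Real.log Z / γ := div_pos (by linarith) hγ.1
  have hle : δ * (Real.log Z / γ) ≤ Real.log 3 / 2 := by
    have e : Real.logb 2 3 / (2 * (γ⁻¹ * Real.logb 2 Z)) = Real.log 3 / 2 / (Real.log Z / γ) := by
      have : Real.log Z ≠ 0 := by linarith
      have := hγ.1.ne'
      simp only [Real.logb]
      field_simp
    rw [e] at hδ
    exact (le_div_iff₀ hCp).1 hδ.2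
  have key := aux_main P X hP hs γ δ Z hγ.1 hδ.1 hZ hZ3 hle
  have hγ0 := hγ.1.ne'
  have hδ0 := hδ.1.ne'
  set M := Real.log (∑ i, P i * Real.exp (-δ * X i)) with hMd
  have e1 : (-δ)⁻¹ * Real.logb 2 (∑ i, P i * Real.exp (-δ * X i)) = -M / (δ * Real.log 2) := by
    simp only [Real.logb, ← hMd]
    field_simp
  have e2 : (∑ i, P i * X i) / Real.log 2 - δ * (γ⁻¹ * Real.logb 2 Z) ^ 2 =
      -(-δ * ∑ i, P i * X i + (δ * (Real.log Z / γ)) ^ 2 / Real.log 2) / (δ * Real.log 2) := by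
    simp only [Real.logb]
    field_simp
    ring
  rw [e1, e2]
  apply div_le_div_of_nonneg_right _ (mul_pos hδ.1 l2).le
  linarith

end QCD
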